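/- arXiv:2308.10563 — 8 statements merged into one kernel-verified Lean document; each statement's English description precedes it below -/
import Mathlib

section
/- Suppose (π*, c̄*) is an optimal solution of the problem (RIOVLP₁¹), i.e. (π*, c̄*) ∈ F₁ and Σ_j d_j|c̄*_j − c_j| ≤ Σ_j d_j|c̄_j − c_j| for every (π, c̄) ∈ F₁. Then c̄* is an optimal solution of the problem (RIOVLP₁), i.e. c̄* ∈ F and Σ_j d_j|c̄*_j − c_j| ≤ Σ_j d_j|c̄_j − c_j| for every c̄ ∈ F. -/
open Matrix BigOperators

/-! A feasible `x₀` minimises `c̄` over `{x | A x = b, x ≥ 0}` exactly when some `π` satisfies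
`πA ≤ c̄` with equality on the support of `x₀`. Hence the feasible set of (RIOVLP₁) is the
projection to `c̄` of that of (RIOVLP₁¹), and minimising a function of `c̄` alone over either set is
the same problem. The multiplier `π` comes from Farkas' lemma: whenever `A y = 0` and `y j ≥ 0` at
the zeros of `x₀`, a short step from `x₀` along `y` stays feasible, so `c̄ ⬝ᵥ y ≥ 0`. -/

/-- The feasible set `F` of (RIOVLP₁): the costs of value `K` at `x₀` for which no feasible solution
of the linear program `A x = b`, `x ≥ 0` is cheaper than `x₀`. -/
def inverseFeasible {R m n : Type*} [NonUnitalNonAssocSemiring R] [LE R] [Fintype n]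
    (A : Matrix m n R) (b : m → R) (x₀ : n → R) (K : R) : Set (n → R) :=
  {c | c ⬝ᵥ x₀ = K ∧ ∀ x, A *ᵥ x = b → 0 ≤ x → c ⬝ᵥ x₀ ≤ c ⬝ᵥ x}

/-- The feasible set `F₁` of (RIOVLP₁¹): the pairs `(π, c)` where `c` has value `K` at `x₀` and `π`
is dual feasible for `c` and complementary to `x₀`. The index sets `J` and `J̄` are encoded by the
conditions `x₀ j = 0` and `0 < x₀ j`. -/
def inverseDualFeasible {R m n : Type*} [NonUnitalNonAssocSemiring R] [Preorder R] [Fintype m]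
    [Fintype n] (A : Matrix m n R) (x₀ : n → R) (K : R) : Set ((m → R) × (n → R)) :=
  {p | (∀ j, x₀ j = 0 → (p.1 ᵥ* A) j ≤ p.2 j) ∧ (∀ j, 0 < x₀ j → (p.1 ᵥ* A) j = p.2 j) ∧
    p.2 ⬝ᵥ x₀ = K}

theorem nonneg_of_mem_hull {R V : Type*} [CommRing R] [PartialOrder R] [IsOrderedRing R]
    [AddCommGroup V] [Module R V] {s : Set (Module.Dual R V)} {f : Module.Dual R V}
    (hf : f ∈ PointedCone.hull R s) {y : V} (hy : ∀ e ∈ s, 0 ≤ e y) : 0 ≤ f y :=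
  (PointedCone.dual_hull (p := LinearMap.id) s).ge hy hf

theorem dotProduct_le_of_vecMul_le {R m n : Type*} [Semiring R] [PartialOrder R] [IsOrderedRing R]
    [Fintype m] [Fintype n] {A : Matrix m n R} {c x₀ x : n → R} {π : m → R}
    (hle : π ᵥ* A ≤ c) (hslack : ∀ j, x₀ j = 0 ∨ (π ᵥ* A) j = c j)
    (hA : A *ᵥ x = A *ᵥ x₀) (hx : 0 ≤ x) : c ⬝ᵥ x₀ ≤ c ⬝ᵥ x :=
  calc
    c ⬝ᵥ x₀ = π ᵥ* A ⬝ᵥ x₀ := by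
      refine Finset.sum_congr rfl fun j _ ↦ ?_
      rcases hslack j with h | h <;> rw [h]
      simp only [mul_zero]
    _ = π ᵥ* A ⬝ᵥ x := by rw [← dotProduct_mulVec, ← hA, dotProduct_mulVec]
    _ ≤ c ⬝ᵥ x := dotProduct_le_dotProduct_of_nonneg_right hle hx

theorem exists_forall_eq_vecMul_dotProduct {𝕜 m n : Type*} [Field 𝕜] [Fintype m] [Fintype n]
    (A : Matrix m n 𝕜) {f : Module.Dual 𝕜 (n → 𝕜)}
    (hf : ∀ y, A *ᵥ y = 0 → f y = 0) : ∃ π : m → 𝕜, ∀ y, f y = π ᵥ* A ⬝ᵥ y := by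
  classical
  have hrange : f ∈ LinearMap.range A.mulVecLin.dualMap := by
    rw [LinearMap.range_dualMap_eq_dualAnnihilator_ker, Submodule.mem_dualAnnihilator]
    exact hf
  obtain ⟨g, rfl⟩ := hrange
  obtain ⟨π, rfl⟩ := (dotProductEquiv 𝕜 m).surjective g
  exact ⟨π, fun y ↦ dotProduct_mulVec π A y⟩

section LinearOrderedField

variable {𝕜 : Type*} [Field 𝕜] [LinearOrder 𝕜] [IsStrictOrderedRing 𝕜]

/-- **Farkas' lemma** relative to a subspace. -/
theorem exists_mem_hull_eqOn_of_forall_nonneg {V : Type*} [AddCommGroup V] [Module 𝕜 V]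
    {s : Set (Module.Dual 𝕜 V)} (hs : s.Finite) {U : Submodule 𝕜 V} {g : Module.Dual 𝕜 V}
    (hg : ∀ y ∈ U, (∀ f ∈ s, 0 ≤ f y) → 0 ≤ g y) :
    ∃ h ∈ PointedCone.hull 𝕜 s, Set.EqOn g h U := by
  induction s, hs using Set.Finite.induction_on generalizing U with
  | empty =>
    refine ⟨0, zero_mem _, fun y hy ↦ le_antisymm ?_ (hg y hy (by simp))⟩
    simpa using hg (-y) (neg_mem hy) (by simp)
  | @insert k s _ _ ih =>
    by_cases hgs : ∀ y ∈ U, (∀ f ∈ s, 0 ≤ f y) → 0 ≤ g y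
    · obtain ⟨h, hh, hgh⟩ := ih hgs
      exact ⟨h, Submodule.span_mono (Set.subset_insert k s) hh, hgh⟩
    push Not at hgs
    obtain ⟨z, hzU, hz, hgz⟩ := hgs
    have hkz : k z < 0 := by
      by_contra! hkz
      exact hgz.not_ge (hg z hzU (Set.forall_mem_insert.2 ⟨hkz, hz⟩))
    -- Passing to the hyperplane `ker k` of `U` makes the constraint `k` redundant.
    obtain ⟨h, hh, hgh⟩ := ih (U := U ⊓ k.ker) fun y hy hys ↦
      hg y hy.1 (Set.forall_mem_insert.2 ⟨(LinearMap.mem_ker.1 hy.2).ge, hys⟩)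
    have hhz : 0 ≤ h z := nonneg_of_mem_hull hh hz
    have hr : 0 ≤ (g z - h z) / k z := div_nonneg_of_nonpos (by linarith) hkz.le
    refine ⟨h + ((g z - h z) / k z) • k, add_mem (Submodule.span_mono (Set.subset_insert k s) hh)
      (PointedCone.smul_mem _ hr (PointedCone.subset_hull (Set.mem_insert k s))), fun y hy ↦ ?_⟩
    have hproj : y - (k y / k z) • z ∈ U ⊓ k.ker := by
      refine ⟨sub_mem hy (U.smul_mem _ hzU), ?_⟩
      simp [hkz.ne]
    have heq := hgh hproj
    simp only [map_sub, map_smul, smul_eq_mul] at heq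
    simp only [LinearMap.add_apply, LinearMap.smul_apply, smul_eq_mul]
    linear_combination heq

theorem exists_pos_nonneg_add_smul {n : Type*} [Finite n] {x y : n → 𝕜}
    (hx : 0 ≤ x) (hy : ∀ j, x j = 0 → 0 ≤ y j) : ∃ ε : 𝕜, 0 < ε ∧ 0 ≤ x + ε • y := by
  -- The ratio test: `M * x j + y j ≥ 0` once `M` bounds `-y j / x j` for all `j` with `x j ≠ 0`.
  obtain ⟨M, hM⟩ := Finite.bddAbove_range fun j ↦ -y j / x j
  have hpos : 0 < max M 1 := lt_max_of_lt_right one_pos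
  refine ⟨(max M 1)⁻¹, inv_pos.2 hpos, fun j ↦ ?_⟩
  have hscaled : -y j ≤ max M 1 * x j := by
    rcases (hx j).eq_or_lt with hj | hj
    · simpa [← hj] using hy j hj.symm
    · exact (div_le_iff₀ hj).1 ((hM ⟨j, rfl⟩).trans (le_max_left M 1))
  have hstep := (inv_mul_le_iff₀ hpos).2 hscaled
  simp only [Pi.zero_apply, Pi.add_apply, Pi.smul_apply, smul_eq_mul]
  linarith

variable {m n : Type*} [Fintype n]

theorem dotProduct_nonneg_of_forall_dotProduct_le {A : Matrix m n 𝕜} {c x₀ y : n → 𝕜}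
    (hx₀ : 0 ≤ x₀) (hmin : ∀ x, A *ᵥ x = A *ᵥ x₀ → 0 ≤ x → c ⬝ᵥ x₀ ≤ c ⬝ᵥ x)
    (hAy : A *ᵥ y = 0) (hy : ∀ j, x₀ j = 0 → 0 ≤ y j) : 0 ≤ c ⬝ᵥ y := by
  obtain ⟨ε, hε, hnonneg⟩ := exists_pos_nonneg_add_smul hx₀ hy
  have hle := hmin (x₀ + ε • y) (by rw [mulVec_add, mulVec_smul, hAy, smul_zero, add_zero]) hnonneg
  rw [dotProduct_add, dotProduct_smul, smul_eq_mul, le_add_iff_nonneg_right] at hle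
  exact nonneg_of_mul_nonneg_right hle hε

variable [Fintype m]

theorem exists_vecMul_le_of_forall_dotProduct_nonneg (A : Matrix m n 𝕜) (c : n → 𝕜) (J : Set n)
    (h : ∀ y, A *ᵥ y = 0 → (∀ j ∈ J, 0 ≤ y j) → 0 ≤ c ⬝ᵥ y) :
    ∃ π : m → 𝕜, (∀ j ∈ J, (π ᵥ* A) j ≤ c j) ∧ ∀ j ∉ J, (π ᵥ* A) j = c j := by
  classical
  let coord : n → Module.Dual 𝕜 (n → 𝕜) := LinearMap.proj
  obtain ⟨f, hf, hcf⟩ := exists_mem_hull_eqOn_of_forall_nonneg (J.toFinite.image coord)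
    (U := A.mulVecLin.ker) (g := dotProductEquiv 𝕜 n c)
    fun y hAy hy ↦ h y hAy fun j hj ↦ hy _ (Set.mem_image_of_mem coord hj)
  obtain ⟨π, hπ⟩ := exists_forall_eq_vecMul_dotProduct A (f := dotProductEquiv 𝕜 n c - f)
    fun y hy ↦ sub_eq_zero.2 (hcf hy)
  -- The slacks of `πA ≤ c` are the values of `f` on the standard basis.
  have hcoef (j : n) : c j - f (Pi.single j 1) = (π ᵥ* A) j := by
    simpa using hπ (Pi.single j 1)
  have hnonneg (j : n) : 0 ≤ f (Pi.single j 1) := by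
    have hsingle : (0 : n → 𝕜) ≤ Pi.single j 1 := Pi.single_nonneg.2 zero_le_one
    exact nonneg_of_mem_hull hf (Set.forall_mem_image.2 fun i _ ↦ hsingle i)
  refine ⟨π, fun j _ ↦ by linarith [hcoef j, hnonneg j], fun j hj ↦ ?_⟩
  have hnonpos : f (Pi.single j 1) ≤ 0 := by
    rw [← neg_nonneg, ← map_neg]
    refine nonneg_of_mem_hull hf (Set.forall_mem_image.2 fun i hi ↦ ?_)
    simp [coord, ne_of_mem_of_not_mem hi hj]
  linarith [hcoef j, hnonneg j]

theorem forall_dotProduct_le_iff_exists_vecMul_le {A : Matrix m n 𝕜} {c x₀ : n → 𝕜}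
    (hx₀ : 0 ≤ x₀) :
    (∀ x, A *ᵥ x = A *ᵥ x₀ → 0 ≤ x → c ⬝ᵥ x₀ ≤ c ⬝ᵥ x) ↔
      ∃ π : m → 𝕜, (∀ j, x₀ j = 0 → (π ᵥ* A) j ≤ c j) ∧ ∀ j, 0 < x₀ j → (π ᵥ* A) j = c j := by
  constructor
  · intro hmin
    obtain ⟨π, hle, heq⟩ := exists_vecMul_le_of_forall_dotProduct_nonneg A c {j | x₀ j = 0}
      fun y hAy hy ↦ dotProduct_nonneg_of_forall_dotProduct_le hx₀ hmin hAy hy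
    exact ⟨π, hle, fun j hj ↦ heq j hj.ne'⟩
  · rintro ⟨π, hle, heq⟩ x hA hx
    have hslack (j : n) : x₀ j = 0 ∨ (π ᵥ* A) j = c j :=
      (hx₀ j).eq_or_lt.imp Eq.symm (heq j)
    exact dotProduct_le_of_vecMul_le (fun j ↦ (hslack j).elim (hle j) le_of_eq) hslack hA hx

theorem image_snd_inverseDualFeasible {A : Matrix m n 𝕜} {b : m → 𝕜} {x₀ : n → 𝕜}
    (hA : A *ᵥ x₀ = b) (hx₀ : 0 ≤ x₀) (K : 𝕜) :
    Prod.snd '' inverseDualFeasible A x₀ K = inverseFeasible A b x₀ K := by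
  subst hA
  ext c
  simp only [inverseFeasible, inverseDualFeasible, Set.mem_image, Set.mem_ofPred_eq, Prod.exists,
    exists_eq_right, forall_dotProduct_le_iff_exists_vecMul_le hx₀, ← and_assoc, exists_and_right]
  exact and_comm

theorem riovlp1_of_riovlp11_general {β : Type*} [LE β] {A : Matrix m n 𝕜} {b : m → 𝕜}
    {x₀ : n → 𝕜} {K : 𝕜} (hA : A *ᵥ x₀ = b) (hx₀ : 0 ≤ x₀) (φ : (n → 𝕜) → β)
    {π : m → 𝕜} {c : n → 𝕜} (hmem : (π, c) ∈ inverseDualFeasible A x₀ K)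
    (hopt : ∀ p ∈ inverseDualFeasible A x₀ K, φ c ≤ φ p.2) :
    c ∈ inverseFeasible A b x₀ K ∧ ∀ c' ∈ inverseFeasible A b x₀ K, φ c ≤ φ c' := by
  rw [← image_snd_inverseDualFeasible hA hx₀]
  exact ⟨Set.mem_image_of_mem Prod.snd hmem, Set.forall_mem_image.2 hopt⟩

end LinearOrderedField

/-- If `(π*, c̄*)` is an optimal solution of (RIOVLP₁¹) then `c̄*` is an
optimal solution of (RIOVLP₁). -/
theorem riovlp1_of_riovlp11 {m n : ℕ} (A : Matrix (Fin m) (Fin n) ℝ) (b : Fin m → ℝ)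
    (c d x0 : Fin n → ℝ) (K : ℝ)
    (hd : ∀ j, 0 < d j) (hx0A : A.mulVec x0 = b) (hx0nn : ∀ j, 0 ≤ x0 j)
    (F : Set (Fin n → ℝ))
    (hF : F = {cbar : Fin n → ℝ | cbar ⬝ᵥ x0 = K ∧
      ∀ x : Fin n → ℝ, A.mulVec x = b → (∀ j, 0 ≤ x j) → cbar ⬝ᵥ x0 ≤ cbar ⬝ᵥ x})
    (F1 : Set ((Fin m → ℝ) × (Fin n → ℝ)))
    (hF1 : F1 = {p : (Fin m → ℝ) × (Fin n → ℝ) |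
      (∀ j, x0 j = 0 → Matrix.vecMul p.1 A j ≤ p.2 j) ∧
      (∀ j, 0 < x0 j → Matrix.vecMul p.1 A j = p.2 j) ∧ p.2 ⬝ᵥ x0 = K})
    (pist : Fin m → ℝ) (cst : Fin n → ℝ)
    (hmem : (pist, cst) ∈ F1)
    (hopt : ∀ p ∈ F1, ∑ j, d j * |cst j - c j| ≤ ∑ j, d j * |p.2 j - c j|) :
    cst ∈ F ∧ ∀ cbar ∈ F, ∑ j, d j * |cst j - c j| ≤ ∑ j, d j * |cbar j - c j| := by
  subst hF hF1
  exact riovlp1_of_riovlp11_general hx0A hx0nn (fun cbar ↦ ∑ j, d j * |cbar j - c j|) hmem hopt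
end

section
/- The feasible solution x⁰ is an optimal solution of the problem min{c̄·x : Ax = b, x ≥ 0} if and only if there exists π ∈ ℝᵐ such that π·A_j ≤ c̄_j for every column index j and π·A_j = c̄_j for every j with x⁰_j > 0 (i.e. π is dual feasible and satisfies the complementary slackness conditions x⁰_j(c̄_j − π·A_j) = 0 for all j). -/
open Matrix BigOperators

/-!
The point `x₀` is optimal iff `0 ≤ c ⬝ᵥ d` for every feasible direction `d` at `x₀`, that is, every
`d ∈ ker A` whose coordinates are nonnegative wherever those of `x₀` vanish. By Farkas' lemma
in the vector space `ker A`, this means that the restriction of `c` to `ker A` is a conical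
combination of these coordinates. A functional vanishing on `ker A` is of the form `π ᵥ* A`, so `c`
is the sum of some `π ᵥ* A` and a nonnegative vector supported on the zero set of `x₀`.
-/

section Projection

variable {𝕜 V : Type*} [Field 𝕜] [AddCommGroup V] [Module 𝕜 V]

/-- The projection of `V` onto the kernel of `f` along `v`, written out by its formula. It is the
identity in the degenerate case `f v = 0`, where the division gives `0`. -/
def projKerAlong (f : Module.Dual 𝕜 V) (v : V) : V →ₗ[𝕜] V :=
  LinearMap.id - f.smulRight ((f v)⁻¹ • v)

theorem apply_projKerAlong (f g : Module.Dual 𝕜 V) (v x : V) :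
    g (projKerAlong f v x) = g x - g v / f v * f x := by
  simp only [projKerAlong, LinearMap.sub_apply, LinearMap.id_apply, LinearMap.smulRight_apply,
    map_sub, map_smul, smul_eq_mul]
  ring

theorem apply_projKerAlong_self {f : Module.Dual 𝕜 V} {v : V} (hv : f v ≠ 0) (x : V) :
    f (projKerAlong f v x) = 0 := by
  rw [apply_projKerAlong, div_self hv, one_mul, sub_self]

end Projection

theorem apply_nonneg_of_mem_hull {R M : Type*} [CommRing R] [PartialOrder R] [IsOrderedRing R]
    [AddCommGroup M] [Module R M] {s : Set (Module.Dual R M)} {f : Module.Dual R M} {x : M}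
    (hf : f ∈ PointedCone.hull R s) (hx : ∀ g ∈ s, 0 ≤ g x) : 0 ≤ f x := by
  have hle : PointedCone.hull R s ≤ PointedCone.dual (Module.Dual.eval R M) {x} :=
    Submodule.span_le.2 fun g hg ↦ by simpa using hx g hg
  simpa using hle hf

section Farkas

variable {𝕜 V ι : Type*} [Field 𝕜] [LinearOrder 𝕜] [IsStrictOrderedRing 𝕜]
  [AddCommGroup V] [Module 𝕜 V]

theorem mem_hull_insert_of_comp_projKerAlong_mem_hull {s : Set (Module.Dual 𝕜 V)}
    {f γ : Module.Dual 𝕜 V} {v : V} (hs : ∀ g ∈ s, 0 ≤ g v) (hf : f v < 0) (hγ : γ v ≤ 0)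
    (h : γ ∘ₗ projKerAlong f v ∈ PointedCone.hull 𝕜 ((· ∘ₗ projKerAlong f v) '' s)) :
    γ ∈ PointedCone.hull 𝕜 (insert f s) := by
  obtain ⟨g, hg, hgP⟩ : ∃ g ∈ PointedCone.hull 𝕜 s,
      g ∘ₗ projKerAlong f v = γ ∘ₗ projKerAlong f v :=
    (Submodule.map_span ((projKerAlong f v).dualMap.restrictScalars {r : 𝕜 // 0 ≤ r}) s).ge h
  have hgv : 0 ≤ g v := apply_nonneg_of_mem_hull hg hs
  have hcoeff : 0 ≤ (γ v - g v) / f v := div_nonneg_of_nonpos (by linarith) hf.le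
  have hdecomp : γ = ((γ v - g v) / f v) • f + g := by
    ext x
    have hx := LinearMap.congr_fun hgP x
    simp only [LinearMap.comp_apply, apply_projKerAlong] at hx
    simp only [LinearMap.add_apply, LinearMap.smul_apply, smul_eq_mul, sub_div, sub_mul]
    linarith
  rw [hdecomp]
  exact add_mem
    (PointedCone.smul_mem _ hcoeff (Submodule.subset_span (Set.mem_insert _ _)))
    (Submodule.span_mono (Set.subset_insert _ _) hg)

/-- Farkas' lemma by Bartl's induction on `s`: if `γ` is negative at a point where every `a i` with
`i ∈ s` is nonnegative, then the new functional `a j` is negative there too, and projecting along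
that point onto the kernel of `a j` reduces to the functionals of `s`. -/
theorem mem_hull_image_of_forall_nonneg (s : Finset ι) (a : ι → Module.Dual 𝕜 V)
    (γ : Module.Dual 𝕜 V) (h : ∀ x, (∀ i ∈ s, 0 ≤ a i x) → 0 ≤ γ x) :
    γ ∈ PointedCone.hull 𝕜 (a '' s) := by
  classical
  induction s using Finset.induction_on generalizing a γ with
  | empty =>
    have hγ : γ = 0 := by
      ext x
      have hneg : 0 ≤ -γ x := by simpa using h (-x)
      exact le_antisymm (neg_nonneg.1 hneg) (h x (by simp))
    simp [hγ]
  | insert j s _ ih =>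
    rw [Finset.coe_insert, Set.image_insert_eq]
    by_cases hs : ∀ x, (∀ i ∈ s, 0 ≤ a i x) → 0 ≤ γ x
    · exact Submodule.span_mono (Set.subset_insert _ _) (ih a γ hs)
    push Not at hs
    obtain ⟨v, hav, hγv⟩ := hs
    have hjv : a j v < 0 := by
      by_contra! hjv
      exact hγv.not_ge (h v (Finset.forall_mem_insert _ _ _ |>.2 ⟨hjv, hav⟩))
    refine mem_hull_insert_of_comp_projKerAlong_mem_hull (Set.forall_mem_image.2 hav) hjv hγv.le ?_
    rw [Set.image_image]
    refine ih _ _ fun x hx ↦ h (projKerAlong (a j) v x) (Finset.forall_mem_insert _ _ _ |>.2 ?_)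
    exact ⟨(apply_projKerAlong_self hjv.ne x).ge, hx⟩

end Farkas

theorem exists_vecMul_eq_of_forall_mulVec_eq_zero {𝕜 ι κ : Type*} [Field 𝕜] [Fintype ι]
    [Fintype κ] (A : Matrix ι κ 𝕜) (c : κ → 𝕜) (h : ∀ x, A *ᵥ x = 0 → c ⬝ᵥ x = 0) :
    ∃ π, π ᵥ* A = c := by
  classical
  have hc : dotProductEquiv 𝕜 κ c ∈ A.mulVecLin.ker.dualAnnihilator :=
    (Submodule.mem_dualAnnihilator _).2 fun x hx ↦ h x hx
  rw [← LinearMap.range_dualMap_eq_dualAnnihilator_ker] at hc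
  obtain ⟨f, hf⟩ := hc
  obtain ⟨π, rfl⟩ := (dotProductEquiv 𝕜 ι).surjective f
  refine ⟨π, dotProduct_eq _ _ fun x ↦ ?_⟩
  rw [← dotProduct_mulVec]
  exact LinearMap.congr_fun hf x

section LinearProgramming

variable {𝕜 ι κ : Type*} [Field 𝕜] [LinearOrder 𝕜] [IsStrictOrderedRing 𝕜]

theorem exists_nonneg_dotProduct_eq_of_forall_mem_submodule [Fintype κ]
    (W : Submodule 𝕜 (κ → 𝕜)) (c : κ → 𝕜) (S : Set κ)
    (h : ∀ d ∈ W, (∀ j ∈ S, 0 ≤ d j) → 0 ≤ c ⬝ᵥ d) :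
    ∃ r : κ → 𝕜, 0 ≤ r ∧ (∀ j ∉ S, r j = 0) ∧ ∀ d ∈ W, r ⬝ᵥ d = c ⬝ᵥ d := by
  classical
  have hmem : (dotProductEquiv 𝕜 κ c).domRestrict W ∈
      PointedCone.hull 𝕜 ((fun j ↦ (LinearMap.proj j).domRestrict W) '' (S.toFinset : Set κ)) :=
    mem_hull_image_of_forall_nonneg _ _ _ fun d hd ↦ h d d.2 (by simpa using hd)
  obtain ⟨w, hw⟩ := Submodule.mem_span_image_finset_iff_exists_fun' _ |>.1 hmem
  refine ⟨S.indicator fun j ↦ (w j : 𝕜), Set.indicator_nonneg fun j _ ↦ (w j).2,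
    fun j hj ↦ Set.indicator_of_notMem hj _, fun d hd ↦ ?_⟩
  calc (S.indicator fun j ↦ (w j : 𝕜)) ⬝ᵥ d = ∑ j ∈ S.toFinset, (w j : 𝕜) * d j := by
        simp [dotProduct, Set.indicator_apply, ← Finset.sum_filter, Set.filter_mem_univ_eq_toFinset]
    _ = c ⬝ᵥ d := by
        have hwd := LinearMap.congr_fun hw ⟨d, hd⟩
        rw [LinearMap.sum_apply] at hwd
        exact hwd

theorem forall_dotProduct_nonneg_iff_exists_vecMul_le [Fintype ι] [Fintype κ] (A : Matrix ι κ 𝕜)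
    (c : κ → 𝕜) (S : Set κ) :
    (∀ d, A *ᵥ d = 0 → (∀ j ∈ S, 0 ≤ d j) → 0 ≤ c ⬝ᵥ d) ↔
      ∃ π, π ᵥ* A ≤ c ∧ ∀ j ∉ S, (π ᵥ* A) j = c j := by
  constructor
  · intro h
    obtain ⟨r, hr, hrS, hrc⟩ :=
      exists_nonneg_dotProduct_eq_of_forall_mem_submodule A.mulVecLin.ker c S h
    obtain ⟨π, hπ⟩ := exists_vecMul_eq_of_forall_mulVec_eq_zero A (c - r) fun d hd ↦ by
      rw [sub_dotProduct, hrc d hd, sub_self]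
    exact ⟨π, hπ.trans_le (sub_le_self c hr), fun j hj ↦ by simp [hπ, hrS j hj]⟩
  · rintro ⟨π, hle, heq⟩ d hd hdS
    have hc : c ⬝ᵥ d = (c - π ᵥ* A) ⬝ᵥ d := by
      rw [sub_dotProduct, ← dotProduct_mulVec, hd, dotProduct_zero, sub_zero]
    rw [hc]
    refine Finset.sum_nonneg fun j _ ↦ ?_
    by_cases hj : j ∈ S
    · exact mul_nonneg (sub_nonneg.2 (hle j)) (hdS j hj)
    · simp [heq j hj]

theorem exists_pos_forall_add_smul_nonneg [Finite κ] {x d : κ → 𝕜} (hx : 0 ≤ x)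
    (hd : ∀ j, x j = 0 → 0 ≤ d j) : ∃ t : 𝕜, 0 < t ∧ 0 ≤ x + t • d := by
  have hM : ∀ j, ∀ᶠ M : 𝕜 in Filter.atTop, -d j ≤ M * x j := fun j ↦ by
    rcases (hx j).eq_or_lt with hj | hj
    · simp [← hj, hd j hj.symm]
    · exact (Filter.tendsto_id.atTop_mul_const hj).eventually_ge_atTop _
  obtain ⟨M, hMpos, hM⟩ :=
    ((Filter.eventually_gt_atTop 0).and (Filter.eventually_all.2 hM)).exists
  refine ⟨M⁻¹, inv_pos.2 hMpos, fun j ↦ ?_⟩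
  have hj : 0 ≤ M⁻¹ * (M * x j + d j) :=
    mul_nonneg (inv_pos.2 hMpos).le (neg_le_iff_add_nonneg.1 (hM j))
  simpa [mul_add, hMpos.ne'] using hj

theorem forall_dotProduct_le_iff_forall_direction_nonneg [Fintype κ] (A : Matrix ι κ 𝕜)
    (c : κ → 𝕜) {x₀ : κ → 𝕜} (hx₀ : 0 ≤ x₀) :
    (∀ x, A *ᵥ x = A *ᵥ x₀ → 0 ≤ x → c ⬝ᵥ x₀ ≤ c ⬝ᵥ x) ↔
      ∀ d, A *ᵥ d = 0 → (∀ j, x₀ j = 0 → 0 ≤ d j) → 0 ≤ c ⬝ᵥ d := by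
  constructor
  · intro hopt d hAd hd
    obtain ⟨t, ht, hnonneg⟩ := exists_pos_forall_add_smul_nonneg hx₀ hd
    have hle := hopt (x₀ + t • d) (by rw [mulVec_add, mulVec_smul, hAd, smul_zero, add_zero])
      hnonneg
    rw [dotProduct_add, dotProduct_smul, le_add_iff_nonneg_right] at hle
    exact nonneg_of_mul_nonneg_right hle ht
  · intro hdir x hAx hx
    have hnonneg := hdir (x - x₀) (by rw [mulVec_sub, hAx, sub_self]) fun j hj ↦ by
      simpa [hj] using hx j
    rwa [dotProduct_sub, sub_nonneg] at hnonneg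

theorem lp_optimality_iff_dual_complementary_general [Fintype ι] [Fintype κ] (A : Matrix ι κ 𝕜)
    (b : ι → 𝕜) (c x₀ : κ → 𝕜) (hAx₀ : A *ᵥ x₀ = b) (hx₀ : 0 ≤ x₀) :
    (∀ x, A *ᵥ x = b → 0 ≤ x → c ⬝ᵥ x₀ ≤ c ⬝ᵥ x) ↔
      ∃ π, π ᵥ* A ≤ c ∧ ∀ j, 0 < x₀ j → (π ᵥ* A) j = c j := by
  subst hAx₀
  have hpos (j : κ) : 0 < x₀ j ↔ j ∉ {j | x₀ j = 0} := (hx₀ j).lt_iff_ne'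
  simp only [hpos]
  exact (forall_dotProduct_le_iff_forall_direction_nonneg A c hx₀).trans
    (forall_dotProduct_nonneg_iff_exists_vecMul_le A c {j | x₀ j = 0})

end LinearProgramming

/-- A feasible solution `x⁰` is optimal for `min {c̄·x : Ax = b, x ≥ 0}`
iff there exists a dual feasible `π` satisfying complementary slackness. -/
theorem lp_optimality_iff_dual_complementary {m n : ℕ} (A : Matrix (Fin m) (Fin n) ℝ)
    (b : Fin m → ℝ) (cbar x0 : Fin n → ℝ)
    (hx0A : A.mulVec x0 = b) (hx0nn : ∀ j, 0 ≤ x0 j) :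
    (∀ x : Fin n → ℝ, A.mulVec x = b → (∀ j, 0 ≤ x j) → cbar ⬝ᵥ x0 ≤ cbar ⬝ᵥ x) ↔
    (∃ π : Fin m → ℝ, (∀ j, Matrix.vecMul π A j ≤ cbar j) ∧
      (∀ j, 0 < x0 j → Matrix.vecMul π A j = cbar j)) :=
  lp_optimality_iff_dual_complementary_general A b cbar x0 hx0A hx0nn
end

section
/- Let z₁ < z₂ be real numbers with F(z₁) ≠ ∅ and F(z₂) ≠ ∅. Then ψ is concave on [z₁, z₂]: for every λ ∈ [0,1], ψ(λz₁ + (1−λ)z₂) ≥ λψ(z₁) + (1−λ)ψ(z₂). -/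
open Matrix BigOperators

/-- Feasible region of the sub-problem `(D^z)`. -/
def Dfeas {m n : ℕ} (A : Matrix (Fin m) (Fin n) ℝ) (d x0 : Fin n → ℝ) (z : ℝ) :
    Set (Fin n → ℝ) :=
  {y | A.mulVec y = 0 ∧
    (∀ j, x0 j = 0 → -d j ≤ y j ∧ y j ≤ 0) ∧
    (∀ j, 0 < x0 j → x0 j * z - d j ≤ y j ∧ y j ≤ x0 j * z + d j)}

/-- `ψ(z) = sup {c·y : y ∈ F(z)}`. -/
noncomputable def psi {m n : ℕ} (A : Matrix (Fin m) (Fin n) ℝ)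
    (c d x0 : Fin n → ℝ) (z : ℝ) : ℝ :=
  sSup ((fun y => c ⬝ᵥ y) '' Dfeas A d x0 z)

/-!
The feasible regions `F(z)` are the slices of a single convex set of pairs `(z, y)`, so the convex
combination of `y₁ ∈ F(z₁)` and `y₂ ∈ F(z₂)` is feasible for the convex combination of the
parameters, and `c ⬝ᵥ ·` takes on it the same convex combination of values. Passing to suprema
gives concavity. Each `F(z)` lies in a box, so these suprema are not the junk value `0` of an
unbounded set.
-/

section ValueFunction

variable {E Y : Type*} [AddCommMonoid E] [AddCommMonoid Y] {F : E → Set Y}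

theorem convex_setOf_nonempty_of_convex_graph {𝕜 : Type*} [Semiring 𝕜] [PartialOrder 𝕜]
    [Module 𝕜 E] [Module 𝕜 Y] (hF : Convex 𝕜 {p : E × Y | p.2 ∈ F p.1}) :
    Convex 𝕜 {x | (F x).Nonempty} := by
  have fst_image_graph : Prod.fst '' {p : E × Y | p.2 ∈ F p.1} = {x | (F x).Nonempty} := by
    ext x
    simp [Set.Nonempty]
  exact fst_image_graph ▸ hF.linear_image (LinearMap.fst 𝕜 E Y)

open scoped Pointwise in
theorem concaveOn_sSup_image [Module ℝ E] [Module ℝ Y] {f : E → Y → ℝ}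
    (hf : ConcaveOn ℝ {p : E × Y | p.2 ∈ F p.1} fun p => f p.1 p.2)
    (hbdd : ∀ x, BddAbove (f x '' F x)) :
    ConcaveOn ℝ {x | (F x).Nonempty} fun x => sSup (f x '' F x) := by
  refine ⟨convex_setOf_nonempty_of_convex_graph hf.1, ?_⟩
  intro x₁ hx₁ x₂ hx₂ a b ha hb hab
  have combination_le : ∀ r ∈ a • (f x₁ '' F x₁) + b • (f x₂ '' F x₂),
      r ≤ sSup (f (a • x₁ + b • x₂) '' F (a • x₁ + b • x₂)) := by
    rintro _ ⟨_, ⟨_, ⟨y₁, hy₁, rfl⟩, rfl⟩, _, ⟨_, ⟨y₂, hy₂, rfl⟩, rfl⟩, rfl⟩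
    have hmem : a • y₁ + b • y₂ ∈ F (a • x₁ + b • x₂) :=
      hf.1 (x := (x₁, y₁)) hy₁ (y := (x₂, y₂)) hy₂ ha hb hab
    exact le_csSup_of_le (hbdd _) (Set.mem_image_of_mem _ hmem)
      (hf.2 (x := (x₁, y₁)) hy₁ (y := (x₂, y₂)) hy₂ ha hb hab)
  have hne₁ : (a • (f x₁ '' F x₁)).Nonempty := (hx₁.image _).smul_set
  have hne₂ : (b • (f x₂ '' F x₂)).Nonempty := (hx₂.image _).smul_set
  calc a • sSup (f x₁ '' F x₁) + b • sSup (f x₂ '' F x₂)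
      = sSup (a • (f x₁ '' F x₁) + b • (f x₂ '' F x₂)) := by
        rw [csSup_add hne₁ ((hbdd x₁).smul_of_nonneg ha) hne₂ ((hbdd x₂).smul_of_nonneg hb),
          Real.sSup_smul_of_nonneg ha, Real.sSup_smul_of_nonneg hb]
    _ ≤ sSup (f (a • x₁ + b • x₂) '' F (a • x₁ + b • x₂)) :=
        csSup_le (hne₁.add hne₂) combination_le

end ValueFunction

section SubProblem

variable {m n : ℕ} (A : Matrix (Fin m) (Fin n) ℝ) (c d x0 : Fin n → ℝ)

theorem convex_graph_Dfeas :
    Convex ℝ {p : ℝ × (Fin n → ℝ) | p.2 ∈ Dfeas A d x0 p.1} := by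
  let param : ℝ × (Fin n → ℝ) →ₗ[ℝ] ℝ := LinearMap.fst ℝ ℝ (Fin n → ℝ)
  let point : ℝ × (Fin n → ℝ) →ₗ[ℝ] Fin n → ℝ := LinearMap.snd ℝ ℝ (Fin n → ℝ)
  let coord (j : Fin n) : ℝ × (Fin n → ℝ) →ₗ[ℝ] ℝ := LinearMap.proj j ∘ₗ point
  have graph_eq : {p : ℝ × (Fin n → ℝ) | p.2 ∈ Dfeas A d x0 p.1} =
      ↑(LinearMap.ker (A.mulVecLin ∘ₗ point)) ∩
        ((⋂ j, ⋂ (_ : x0 j = 0), coord j ⁻¹' Set.Icc (-d j) 0) ∩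
          ⋂ j, ⋂ (_ : 0 < x0 j), (coord j - x0 j • param) ⁻¹' Set.Icc (-d j) (d j)) := by
    ext p
    simp [Dfeas, param, point, coord, sub_eq_add_neg, add_comm]
  rw [graph_eq]
  exact (Submodule.convex _).inter <|
    (convex_iInter₂ fun j _ => (convex_Icc _ _).linear_preimage (coord j)).inter
      (convex_iInter₂ fun j _ => (convex_Icc _ _).linear_preimage (coord j - x0 j • param))

variable {x0}

theorem Dfeas_subset_Icc (hx0 : ∀ j, 0 ≤ x0 j) (z : ℝ) :
    Dfeas A d x0 z ⊆ Set.Icc (z • x0 - d) (z • x0 + d) := by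
  rintro y ⟨-, hzero, hpos⟩
  have coord_mem (j : Fin n) : x0 j * z - d j ≤ y j ∧ y j ≤ x0 j * z + d j := by
    rcases (hx0 j).eq_or_lt' with hj | hj
    · obtain ⟨hlower, hupper⟩ := hzero j hj
      have hdj : 0 ≤ d j := neg_nonpos.1 (hlower.trans hupper)
      rw [hj, zero_mul, zero_sub, zero_add]
      exact ⟨hlower, hupper.trans hdj⟩
    · exact hpos j hj
  constructor <;> intro j
  · simpa [mul_comm] using (coord_mem j).1
  · simpa [mul_comm] using (coord_mem j).2

theorem bddAbove_dotProduct_image_Dfeas (hx0 : ∀ j, 0 ≤ x0 j) (z : ℝ) :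
    BddAbove ((fun y => c ⬝ᵥ y) '' Dfeas A d x0 z) :=
  (isCompact_Icc.bddAbove_image (by fun_prop)).mono
    (Set.image_mono (Dfeas_subset_Icc A d hx0 z))

theorem concaveOn_psi (hx0 : ∀ j, 0 ≤ x0 j) :
    ConcaveOn ℝ {z | (Dfeas A d x0 z).Nonempty} (psi A c d x0) := by
  have objective_concave : ConcaveOn ℝ {p : ℝ × (Fin n → ℝ) | p.2 ∈ Dfeas A d x0 p.1}
      fun p => c ⬝ᵥ p.2 :=
    (dotProductBilin ℝ ℝ c ∘ₗ LinearMap.snd ℝ ℝ (Fin n → ℝ)).concaveOn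
      (convex_graph_Dfeas A d x0)
  exact concaveOn_sSup_image (f := fun _ y => c ⬝ᵥ y) objective_concave
    (bddAbove_dotProduct_image_Dfeas A c d hx0)

end SubProblem

/-- `ψ` is concave on `[z₁, z₂]` whenever `F(z₁)` and `F(z₂)` are nonempty. -/
theorem psi_concave {m n : ℕ} (A : Matrix (Fin m) (Fin n) ℝ)
    (c d x0 : Fin n → ℝ) (hd : ∀ j, 0 < d j) (hx0 : ∀ j, 0 ≤ x0 j)
    (z₁ z₂ : ℝ) (h12 : z₁ < z₂)
    (h1 : (Dfeas A d x0 z₁).Nonempty) (h2 : (Dfeas A d x0 z₂).Nonempty)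
    (lam : ℝ) (hlam0 : 0 ≤ lam) (hlam1 : lam ≤ 1) :
    lam * psi A c d x0 z₁ + (1 - lam) * psi A c d x0 z₂ ≤
      psi A c d x0 (lam * z₁ + (1 - lam) * z₂) := by
  exact (concaveOn_psi A c d hx0).2 h1 h2 hlam0 (sub_nonneg.2 hlam1) (add_sub_cancel lam 1)
end

section
/- If z₁ < 0 and F(z₁) = ∅, then F(z) = ∅ for every z ≤ z₁. -/
open Matrix BigOperators

/-
Scaling `y ∈ F(z)` by `t ∈ [0, 1]` gives a point of `F(t z)`: the kernel of `A` and the half-line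
`y_j ≤ 0` are cones, while the bounds by `d` only become slacker. So the parameters `z` with `F(z)`
nonempty form a set star-shaped about `0`, and a `z₁` outside it excludes every `z`
for which `z₁` lies between `0` and `z`.
-/

section

variable {m n : ℕ} {A : Matrix (Fin m) (Fin n) ℝ} {d x0 y : Fin n → ℝ} {t z z₁ : ℝ}

theorem smul_mem_Dfeas_smul (ht₀ : 0 ≤ t) (ht₁ : t ≤ 1) (hy : y ∈ Dfeas A d x0 z) :
    t • y ∈ Dfeas A d x0 (t • z) := by
  obtain ⟨hA, hzero, hpos⟩ := hy
  refine ⟨by rw [mulVec_smul, hA, smul_zero], fun j hj ↦ ?_, fun j hj ↦ ?_⟩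
  · obtain ⟨hlower, hupper⟩ := hzero j hj
    exact ⟨hlower.trans (le_mul_of_le_one_left hupper ht₁),
      mul_nonpos_of_nonneg_of_nonpos ht₀ hupper⟩
  · have hdev : |y j - x0 j * z| ≤ d j := by
      obtain ⟨hlower, hupper⟩ := hpos j hj
      exact abs_le.2 ⟨by linarith, by linarith⟩
    have hdev_smul : |t * y j - x0 j * (t * z)| ≤ d j :=
      calc |t * y j - x0 j * (t * z)| = t * |y j - x0 j * z| := by
            rw [mul_left_comm, ← mul_sub, abs_mul, abs_of_nonneg ht₀]
        _ ≤ |y j - x0 j * z| := mul_le_of_le_one_left (abs_nonneg _) ht₁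
        _ ≤ d j := hdev
    obtain ⟨hlower, hupper⟩ := abs_le.1 hdev_smul
    simp only [Pi.smul_apply, smul_eq_mul]
    exact ⟨by linarith, by linarith⟩

theorem starConvex_setOf_Dfeas_nonempty :
    StarConvex ℝ 0 {z | (Dfeas A d x0 z).Nonempty} :=
  starConvex_zero_iff.2 fun _ ⟨_, hy⟩ _ ht₀ ht₁ ↦ ⟨_, smul_mem_Dfeas_smul ht₀ ht₁ hy⟩

theorem Dfeas_empty_of_le_general (hz₁ : z₁ ∈ Set.uIcc 0 z) (hempty : Dfeas A d x0 z₁ = ∅) :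
    Dfeas A d x0 z = ∅ := by
  contrapose! hempty with hz
  rw [← segment_eq_uIcc] at hz₁
  exact starConvex_setOf_Dfeas_nonempty.segment_subset hz hz₁

end

/-- if `z₁ < 0` and `F(z₁) = ∅`, then `F(z) = ∅` for every `z ≤ z₁`. -/
theorem Dfeas_empty_of_le {m n : ℕ} (A : Matrix (Fin m) (Fin n) ℝ)
    (c d x0 : Fin n → ℝ) (hd : ∀ j, 0 < d j) (hx0 : ∀ j, 0 ≤ x0 j)
    (z₁ : ℝ) (hz₁ : z₁ < 0) (hempty : Dfeas A d x0 z₁ = ∅) :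
    ∀ z : ℝ, z ≤ z₁ → Dfeas A d x0 z = ∅ :=
  fun _ hz ↦ Dfeas_empty_of_le_general (Set.mem_uIcc_of_ge hz hz₁.le) hempty
end

section
/- If z₂ > 0 and F(z₂) = ∅, then F(z) = ∅ for every z ≥ z₂. -/
/-!
If `y ∈ F z` and `0 ≤ t ≤ 1`, then `t • y ∈ F (t * z)`: the bounds on `y j - x0 j * z` do not
depend on `z`, and they enclose `0`. Taking `t = z₂ / z` carries a point of `F z` to a point of
`F z₂`.
-/

open Matrix BigOperators

section Dilation

variable {R : Type*} [Ring R] [LinearOrder R] [IsStrictOrderedRing R]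

theorem mul_mem_Icc_sub_add {a b c t x : R} (ha : 0 ≤ a) (hb : 0 ≤ b)
    (ht : t ∈ Set.Icc 0 1) (hx : x ∈ Set.Icc (c - a) (c + b)) :
    t * x ∈ Set.Icc (t * c - a) (t * c + b) := by
  constructor
  · calc
      t * c - a ≤ t * c - t * a := sub_le_sub_left (mul_le_of_le_one_left ha ht.2) _
      _ = t * (c - a) := (mul_sub t c a).symm
      _ ≤ t * x := mul_le_mul_of_nonneg_left hx.1 ht.1
  · calc
      t * x ≤ t * (c + b) := mul_le_mul_of_nonneg_left hx.2 ht.1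
      _ = t * c + t * b := mul_add t c b
      _ ≤ t * c + b := add_le_add_right (mul_le_of_le_one_left hb ht.2) _

end Dilation

section Feasibility

variable {m n : ℕ} {A : Matrix (Fin m) (Fin n) ℝ} {d x0 y : Fin n → ℝ} {t z z₁ z₂ : ℝ}

theorem smul_mem_Dfeas_mul (ht : t ∈ Set.Icc 0 1) (hy : y ∈ Dfeas A d x0 z) :
    t • y ∈ Dfeas A d x0 (t * z) := by
  obtain ⟨hker, hzero, hpos⟩ := hy
  refine ⟨by rw [mulVec_smul, hker, smul_zero], fun j hj ↦ ?_, fun j hj ↦ ?_⟩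
  · have hd : 0 ≤ d j := by linarith [hzero j hj]
    have hyj : y j ∈ Set.Icc (0 - d j) (0 + 0) := by simpa using hzero j hj
    simpa using mul_mem_Icc_sub_add hd le_rfl ht hyj
  · have hd : 0 ≤ d j := by linarith [hpos j hj]
    simpa [mul_left_comm] using mul_mem_Icc_sub_add hd hd ht (hpos j hj)

theorem Dfeas_nonempty_of_le (hz₁ : 0 ≤ z₁) (hle : z₁ ≤ z₂) (hne : (Dfeas A d x0 z₂).Nonempty) :
    (Dfeas A d x0 z₁).Nonempty := by
  obtain ⟨y, hy⟩ := hne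
  have hratio : z₁ / z₂ ∈ Set.Icc 0 1 :=
    ⟨div_nonneg hz₁ (hz₁.trans hle), div_le_one_of_le₀ hle (hz₁.trans hle)⟩
  have hcancel : z₁ / z₂ * z₂ = z₁ :=
    div_mul_cancel_of_imp fun hz₂ ↦ le_antisymm (hle.trans_eq hz₂) hz₁
  exact ⟨(z₁ / z₂) • y, by simpa only [hcancel] using smul_mem_Dfeas_mul hratio hy⟩

end Feasibility

/-- if `z₂ > 0` and `F(z₂) = ∅`, then `F(z) = ∅` for every `z ≥ z₂`. -/
theorem Dfeas_empty_of_ge {m n : ℕ} (A : Matrix (Fin m) (Fin n) ℝ)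
    (c d x0 : Fin n → ℝ) (hd : ∀ j, 0 < d j) (hx0 : ∀ j, 0 ≤ x0 j)
    (z₂ : ℝ) (hz₂ : 0 < z₂) (hempty : Dfeas A d x0 z₂ = ∅) :
    ∀ z : ℝ, z₂ ≤ z → Dfeas A d x0 z = ∅ := by
  intro z hz
  by_contra hne
  exact (Dfeas_nonempty_of_le hz₂.le hz (Set.nonempty_iff_ne_empty.2 hne)).ne_empty hempty
end

section
/- If there exists z₁ < 0 with F(z₁) = ∅, then there exists a left break point: a real number z_l < 0 such that F(z) = ∅ for every z < z_l and F(z) ≠ ∅ for every z ∈ [z_l, 0]. -/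
open Matrix BigOperators

/-
Subtracting `z • x⁰` turns the bounds of `(D^z)` into a fixed box `B`, so `F(z)` is nonempty
exactly when `-z • A x⁰` lies in the compact convex set `A B`. The feasible parameters thus form
the preimage of a compact convex set under a linear map, i.e. a closed interval. It is a
neighbourhood of `0`, because `y = 0` stays feasible for small `z`, and the left break point is its
left end.
-/

open Set Topology

theorem mem_lowerBounds_of_ordConnected_of_notMem {α : Type*} [LinearOrder α] {s : Set α}
    (hs : s.OrdConnected) {a b : α} (ha : a ∈ s) (hba : b ≤ a) (hb : b ∉ s) :
    b ∈ lowerBounds s := fun _ hx =>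
  le_of_not_ge fun hxb => hb (hs.out hx ha ⟨hxb, hba⟩)

/-- The box of admissible deviations `y - z • x⁰` in `(D^z)`; it does not depend on `z`. The upper
bound is `0` on `J` and `d` on `J̄`, the support of `x⁰`. -/
def deviationBox {ι : Type*} (d x0 : ι → ℝ) : Set (ι → ℝ) :=
  Icc (-d) ((Function.support x0).indicator d)

theorem eventually_smul_mem_deviationBox {ι : Type*} [Finite ι] {d : ι → ℝ} (hd : ∀ j, 0 < d j)
    (x0 : ι → ℝ) : ∀ᶠ z : ℝ in 𝓝 0, z • x0 ∈ deviationBox d x0 := by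
  have small : ∀ᶠ z : ℝ in 𝓝 0, ∀ j, |z * x0 j| < d j := Filter.eventually_all.2 fun j => by
    have cont : Continuous fun z : ℝ => |z * x0 j| := by fun_prop
    exact cont.continuousAt.eventually_lt_const (by simpa using hd j)
  filter_upwards [small] with z hz
  refine ⟨fun j => (abs_lt.1 (hz j)).1.le, fun j => ?_⟩
  by_cases hj : x0 j = 0
  · simp [hj]
  · simpa [hj] using (abs_lt.1 (hz j)).2.le

section FeasibleParams

variable {m n : ℕ} (A : Matrix (Fin m) (Fin n) ℝ) (d : Fin n → ℝ) {x0 : Fin n → ℝ}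

theorem mem_Dfeas_iff_sub_mem_deviationBox (hx0 : ∀ j, 0 ≤ x0 j) {z : ℝ} {y : Fin n → ℝ} :
    y ∈ Dfeas A d x0 z ↔ A *ᵥ y = 0 ∧ y - z • x0 ∈ deviationBox d x0 := by
  refine and_congr_right fun _ => ?_
  simp only [deviationBox, mem_Icc, Pi.le_def, ← forall_and]
  refine forall_congr' fun j => ?_
  rcases (hx0 j).eq_or_lt with hj | hj
  · simp [← hj]
  · simp only [hj, hj.ne', Pi.neg_apply, Pi.sub_apply, Pi.smul_apply, smul_eq_mul,
      indicator_of_mem (Function.mem_support.2 hj.ne'), false_imp_iff, true_and, true_imp_iff]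
    constructor <;> rintro ⟨hl, hu⟩ <;> constructor <;> linarith

variable (x0) in
/-- The parameters `z` for which the sub-problem `(D^z)` is feasible. -/
def feasibleParams : Set ℝ :=
  {z | (Dfeas A d x0 z).Nonempty}

theorem feasibleParams_eq_preimage (hx0 : ∀ j, 0 ≤ x0 j) :
    feasibleParams A d x0 =
      LinearMap.toSpanSingleton ℝ _ (-(A *ᵥ x0)) ⁻¹' (A.mulVecLin '' deviationBox d x0) := by
  ext z
  simp only [feasibleParams, Set.Nonempty, mem_Dfeas_iff_sub_mem_deviationBox A d hx0,
    mem_ofPred_eq, mem_preimage, mem_image, LinearMap.toSpanSingleton_apply, mulVecLin_apply]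
  constructor
  · rintro ⟨y, hy, hbox⟩
    exact ⟨y - z • x0, hbox, by simp [mulVec_sub, mulVec_smul, hy]⟩
  · rintro ⟨w, hbox, hw⟩
    exact ⟨w + z • x0, by simp [mulVec_add, mulVec_smul, hw], by simpa using hbox⟩

theorem isClosed_feasibleParams (hx0 : ∀ j, 0 ≤ x0 j) : IsClosed (feasibleParams A d x0) := by
  rw [feasibleParams_eq_preimage A d hx0]
  have compact_image : IsCompact (A.mulVecLin '' deviationBox d x0) :=
    isCompact_Icc.image A.mulVecLin.continuous_of_finiteDimensional
  exact compact_image.isClosed.preimage (LinearMap.continuous_of_finiteDimensional _)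

theorem convex_feasibleParams (hx0 : ∀ j, 0 ≤ x0 j) : Convex ℝ (feasibleParams A d x0) := by
  rw [feasibleParams_eq_preimage A d hx0]
  exact ((convex_Icc _ _).linear_image _).linear_preimage _

variable {d} in
theorem feasibleParams_mem_nhds_zero (hd : ∀ j, 0 < d j) (hx0 : ∀ j, 0 ≤ x0 j) :
    feasibleParams A d x0 ∈ 𝓝 0 := by
  have neg_tendsto : Filter.Tendsto (fun z : ℝ => -z) (𝓝 0) (𝓝 0) :=
    continuous_neg.tendsto' 0 0 neg_zero
  filter_upwards [neg_tendsto.eventually (eventually_smul_mem_deviationBox hd x0)] with z hz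
  exact ⟨0, (mem_Dfeas_iff_sub_mem_deviationBox A d hx0).2 ⟨mulVec_zero A, by simpa using hz⟩⟩

end FeasibleParams

/-- if `F(z₁) = ∅` for some `z₁ < 0`, then the left break point exists. -/
theorem exists_left_break_point {m n : ℕ} (A : Matrix (Fin m) (Fin n) ℝ)
    (c d x0 : Fin n → ℝ) (hd : ∀ j, 0 < d j) (hx0 : ∀ j, 0 ≤ x0 j)
    (h : ∃ z₁ : ℝ, z₁ < 0 ∧ Dfeas A d x0 z₁ = ∅) :
    ∃ zl : ℝ, zl < 0 ∧ (∀ z : ℝ, z < zl → Dfeas A d x0 z = ∅) ∧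
      (∀ z ∈ Set.Icc zl 0, (Dfeas A d x0 z).Nonempty) := by
  obtain ⟨z₁, hz₁, hempty⟩ := h
  have feasible_near : feasibleParams A d x0 ∈ 𝓝 0 := feasibleParams_mem_nhds_zero A hd hx0
  have zero_feasible : 0 ∈ feasibleParams A d x0 := mem_of_mem_nhds feasible_near
  have ordConnected := (convex_feasibleParams A d hx0).ordConnected
  have lower_bound : z₁ ∈ lowerBounds (feasibleParams A d x0) :=
    mem_lowerBounds_of_ordConnected_of_notMem ordConnected zero_feasible hz₁.le
      (not_nonempty_iff_eq_empty.2 hempty)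
  have isLeast : IsLeast (feasibleParams A d x0) (sInf (feasibleParams A d x0)) :=
    (isClosed_feasibleParams A d hx0).isLeast_csInf ⟨0, zero_feasible⟩ ⟨z₁, lower_bound⟩
  obtain ⟨z₂, hz₂, feasible_z₂⟩ := Filter.Eventually.exists_lt feasible_near
  exact ⟨sInf (feasibleParams A d x0), (isLeast.2 feasible_z₂).trans_lt hz₂,
    fun z hz => not_nonempty_iff_eq_empty.1 fun hne => hz.not_ge (isLeast.2 hne),
    fun z hz => ordConnected.out isLeast.1 zero_feasible hz⟩
end

section
/- Suppose A is totally unimodular, x⁰ and d are integer vectors, and J̄ ≠ ∅. Let z₀ ∈ ℝ be a turning coordinate of ψ in the following sense: there exists ε₀ > 0 such that F(z) ≠ ∅ for all z ∈ [z₀ − ε₀, z₀ + ε₀], and for every ε > 0 there are no real numbers a, b with ψ(z) = a·z + b for all z ∈ [z₀ − ε, z₀ + ε]. Then there exist integers ς and σ with σ ≠ 0 such that z₀ = ς/σ, |σ| ≤ 2·|J̄|·x⁰_max, and |ς| ≤ (n + |J̄|)·d_max. -/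
open Matrix BigOperators

/-- Every square submatrix has determinant `0`, `1` or `-1`. -/
def TotUnimodular {m n : ℕ} (A : Matrix (Fin m) (Fin n) ℝ) : Prop :=
  ∀ (k : ℕ) (f : Fin k → Fin m) (g : Fin k → Fin n),
    (A.submatrix f g).det = 0 ∨ (A.submatrix f g).det = 1 ∨ (A.submatrix f g).det = -1

/-!
Let `y` be optimal at a turning coordinate `z₀` and let `T` be the set of coordinates in which a
bound is attained. If some `w ∈ ker A` agreed with `x⁰` on `T`, then `y + t • w` would be feasible
at `z₀ + t` for all small `t` of either sign, hence optimal there by convexity, and `ψ` would be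
affine near `z₀`. So `x⁰` restricted to `T` does not extend to `ker A`, and Cramer's rule for a
totally unimodular `A` yields a vector `D` with entries in `{0, ±1}`, supported on `T` and
orthogonal to `ker A`, such that `D ⬝ᵥ x⁰ ≠ 0`. Since `y j = z₀ * x⁰ j + s j` on `T`, where `s j` is
the attained bound, `D ⬝ᵥ y = 0` reads `z₀ * (D ⬝ᵥ x⁰) = -(D ⬝ᵥ s)`.
-/

open Filter Topology

section Unimodular

variable {K m n : Type*} [Field K] [Finite m] {A : Matrix m n K}

lemma exists_det_submatrix_ne_zero {ι : Type*} [Fintype ι] [DecidableEq ι] {M : Matrix m ι K}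
    (hM : LinearIndependent K M.col) : ∃ f : ι → m, (M.submatrix f id).det ≠ 0 := by
  have := Fintype.ofFinite m
  have hrank : M.rank = Fintype.card ι := by
    rw [← Matrix.rank_transpose]
    exact LinearIndependent.rank_matrix (M := Mᵀ) hM
  rw [Matrix.rank_eq_finrank_span_row] at hrank
  obtain ⟨r, hr, -, hrli⟩ := Submodule.exists_fun_fin_finrank_span_eq K (Set.range M.row)
  choose g hg using hr
  let e := Fintype.equivFinOfCardEq hrank.symm
  have hrows : (M.submatrix (g ∘ e) id).row = r ∘ e := funext fun i => hg (e i)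
  have hli : LinearIndependent K (M.submatrix (g ∘ e) id).row :=
    hrows ▸ hrli.comp e e.injective
  rw [Matrix.linearIndependent_rows_iff_isUnit, Matrix.isUnit_iff_isUnit_det] at hli
  exact ⟨g ∘ e, hli.ne_zero⟩

lemma exists_dual_apply_col_mem_range_sign (hA : A.IsTotallyUnimodular) {N : Set n} {b : m → K}
    (hb : b ∉ Submodule.span K (A.col '' N)) :
    ∃ φ : Module.Dual K (m → K), φ b ≠ 0 ∧ (∀ j ∈ N, φ (A.col j) = 0) ∧
      ∀ j, φ (A.col j) ∈ Set.range SignType.cast := by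
  classical
  obtain ⟨κ, a, -, hspan, hli⟩ := exists_linearIndependent' K fun j : N => A.col j
  rw [Set.image_eq_range, ← hspan] at hb
  let M : Matrix m (Option κ) K := .of fun i o => o.elim (b i) fun k => A i (a k)
  have hM : LinearIndependent K M.col := linearIndependent_option.2 ⟨hli, hb⟩
  have := hM.finite
  have := Fintype.ofFinite (Option κ)
  obtain ⟨f, hf⟩ := exists_det_submatrix_ne_zero hM
  -- `φ v` is the determinant of the rows `f` of `M`, with the column `b` replaced by `v`.
  let φ : Module.Dual K (m → K) :=
    LinearMap.proj none ∘ₗ (M.submatrix f id).cramer ∘ₗ LinearMap.funLeft K K f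
  have hφM (o : Option κ) : φ (M.col o) = (Pi.single o (M.submatrix f id).det : _ → K) none :=
    congrFun (Matrix.cramer_row_self (M.submatrix f id) (M.col o ∘ f) o fun _ => rfl) none
  have hφb : φ b = (M.submatrix f id).det := (hφM none).trans (Pi.single_eq_same none _)
  have hφcol (k : κ) : φ (A.col (a k)) = 0 :=
    (hφM (some k)).trans (Pi.single_eq_of_ne (Option.some_ne_none k).symm _)
  refine ⟨φ, hφb ▸ hf, fun j hj => ?_, fun j => ?_⟩
  · have hle : Submodule.span K (Set.range fun j : N => A.col j) ≤ LinearMap.ker φ := by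
      rw [← hspan, Submodule.span_le]
      rintro _ ⟨k, rfl⟩
      exact hφcol k
    exact hle (Submodule.subset_span ⟨⟨j, hj⟩, rfl⟩)
  · have hφj : φ (A.col j) = (A.submatrix f fun o => o.elim j fun k => a k).det := by
      refine congrArg Matrix.det (Matrix.ext fun i o => ?_)
      cases o <;> simp [M]
    rw [hφj]
    exact (Matrix.isTotallyUnimodular_iff_fintype A).1 hA _ _ _

lemma exists_sign_dotProduct_eq_zero [Fintype n] (hA : A.IsTotallyUnimodular) {T : Set n}
    {x : n → K} (hx : ∀ w, A *ᵥ w = 0 → ∃ j ∈ T, w j ≠ x j) :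
    ∃ D : n → SignType, (∀ v, A *ᵥ v = 0 → (fun j => (D j : K)) ⬝ᵥ v = 0) ∧
      (∀ j ∉ T, D j = 0) ∧ (fun j => (D j : K)) ⬝ᵥ x ≠ 0 := by
  have hcol (v : n → K) : A *ᵥ v = ∑ j, v j • A.col j := by
    ext i
    simp [Matrix.mulVec, dotProduct, mul_comm]
  have hspan : A *ᵥ x ∉ Submodule.span K (A.col '' Tᶜ) := by
    intro hmem
    obtain ⟨r, hrT, hr⟩ := (Finsupp.mem_span_image_iff_linearCombination K).1 hmem
    have hAr : A *ᵥ r = A *ᵥ x := by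
      rw [hcol r, ← hr, Finsupp.linearCombination_apply, Finsupp.sum_fintype _ _ (by simp)]
    obtain ⟨j, hjT, hj⟩ := hx (x - r) (by rw [Matrix.mulVec_sub, hAr, sub_self])
    exact hj (by simp [(Finsupp.mem_supported' K r).1 hrT j (not_not_intro hjT)])
  obtain ⟨φ, hφx, hφT, hφ⟩ := exists_dual_apply_col_mem_range_sign hA hspan
  choose D hD using hφ
  have hφD (v : n → K) : φ (A *ᵥ v) = (fun j => (D j : K)) ⬝ᵥ v := by
    simp [hcol, dotProduct, hD, mul_comm]
  refine ⟨D, fun v hv => by rw [← hφD, hv, map_zero], fun j hj => ?_, hφD x ▸ hφx⟩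
  have hDj : (D j : K) = 0 := (hD j).trans (hφT j hj)
  rcases (D j).trichotomy with h | h | h <;> simp_all

end Unimodular

lemma abs_sign_dotProduct_le {ι : Type*} [Fintype ι] (D : ι → SignType) (v : ι → ℝ) :
    |(fun j => (D j : ℝ)) ⬝ᵥ v| ≤ ∑ j, |v j| := by
  refine (Finset.abs_sum_le_sum_abs _ _).trans (Finset.sum_le_sum fun j _ => ?_)
  rcases (D j).trichotomy with h | h | h <;> simp [h]

lemma exists_int_eq_sign_dotProduct {ι : Type*} [Fintype ι] (D : ι → SignType) {v : ι → ℝ}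
    (hv : ∀ j, ∃ a : ℤ, v j = a) : ∃ a : ℤ, (fun j => (D j : ℝ)) ⬝ᵥ v = a := by
  choose a ha using hv
  exact ⟨∑ j, D j * a j, by simp [dotProduct, ha]⟩

section ParametricProgram

lemma isMaxOn_add_of_convex_graph {P E : Type*} [AddCommGroup P] [Module ℝ P] [AddCommGroup E]
    [Module ℝ E] {F : P → Set E} (hF : Convex ℝ {q : P × E | q.2 ∈ F q.1}) {φ : E →ₗ[ℝ] ℝ}
    {p t : P} {y w : E} (hy : IsMaxOn φ (F p) y) (hw : y - w ∈ F (p - t)) :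
    IsMaxOn φ (F (p + t)) (y + w) := by
  intro y' hy'
  have hmid : (1 / 2 : ℝ) • y' + (1 / 2 : ℝ) • (y - w) ∈ F p := by
    have h := hF (x := (p + t, y')) hy' (y := (p - t, y - w)) hw
      (by norm_num : (0 : ℝ) ≤ 1 / 2) (by norm_num : (0 : ℝ) ≤ 1 / 2) (by norm_num)
    have hp : (1 / 2 : ℝ) • (p + t) + (1 / 2 : ℝ) • (p - t) = p := by module
    rwa [← hp]
  have hle := isMaxOn_iff.1 hy _ hmid
  simp only [map_add, map_smul, map_sub, smul_eq_mul] at hle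
  simp only [Set.mem_ofPred_eq, map_add]
  linarith

lemma eventually_add_smul_mem_Icc {ι : Type*} [Finite ι] {l u s v : ι → ℝ}
    (hs : s ∈ Set.Icc l u) (hv : ∀ j, s j = l j ∨ s j = u j → v j = 0) :
    ∀ᶠ t : ℝ in 𝓝 0, s + t • v ∈ Set.Icc l u := by
  have hcoord (j : ι) : ∀ᶠ t : ℝ in 𝓝 0, s j + t * v j ∈ Set.Icc (l j) (u j) := by
    by_cases hj : s j = l j ∨ s j = u j
    · simpa [hv j hj] using ⟨hs.1 j, hs.2 j⟩
    · push Not at hj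
      have hcont : ContinuousAt (fun t : ℝ => s j + t * v j) 0 := by fun_prop
      refine hcont.eventually_mem (Icc_mem_nhds ?_ ?_)
      · simpa using (hs.1 j).lt_of_ne' hj.1
      · simpa using (hs.2 j).lt_of_ne hj.2
  filter_upwards [eventually_all.2 hcoord] with t ht
  exact ⟨fun j => (ht j).1, fun j => (ht j).2⟩

variable {m n : Type*} [Fintype n] {A : Matrix m n ℝ} {x l u : n → ℝ} {z₀ : ℝ}
  {φ : (n → ℝ) →ₗ[ℝ] ℝ}

/-- The points of `ker A` in the box `[l, u]` translated by `z • x`: the feasible set, at the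
parameter `z`, of a linear program whose bounds all move with the parameter. `Dfeas` is the
case `x = x⁰`, `l = -d`, with `u` equal to `0` on `J` and to `d` on `J̄`. -/
def slidingBox (A : Matrix m n ℝ) (x l u : n → ℝ) (z : ℝ) : Set (n → ℝ) :=
  {y | A *ᵥ y = 0 ∧ y - z • x ∈ Set.Icc l u}

lemma convex_graph_slidingBox (A : Matrix m n ℝ) (x l u : n → ℝ) :
    Convex ℝ {q : ℝ × (n → ℝ) | q.2 ∈ slidingBox A x l u q.1} :=
  (LinearMap.ker (A.mulVecLin ∘ₗ .snd ℝ ℝ (n → ℝ))).convex.inter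
    ((convex_Icc l u).linear_preimage
      (.snd ℝ ℝ (n → ℝ) - (LinearMap.fst ℝ ℝ (n → ℝ)).smulRight x))

lemma isCompact_slidingBox (A : Matrix m n ℝ) (x l u : n → ℝ) (z : ℝ) :
    IsCompact (slidingBox A x l u z) := by
  have hclosed : IsClosed {y : n → ℝ | A *ᵥ y = 0} :=
    isClosed_eq (by fun_prop) continuous_const
  have hbox : IsCompact ((fun y => y - z • x) ⁻¹' Set.Icc l u) := by
    rw [Set.preimage_sub_const_Icc]
    exact isCompact_Icc
  exact hbox.inter_left hclosed

lemma eventually_add_smul_mem_slidingBox {y w : n → ℝ} (hy : y ∈ slidingBox A x l u z₀)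
    (hw : A *ᵥ w = 0)
    (hwx : ∀ j, (y - z₀ • x) j = l j ∨ (y - z₀ • x) j = u j → w j = x j) :
    ∀ᶠ t in 𝓝 0, y + t • w ∈ slidingBox A x l u (z₀ + t) := by
  have hbox := eventually_add_smul_mem_Icc (v := w - x) hy.2 fun j hj => sub_eq_zero.2 (hwx j hj)
  filter_upwards [hbox] with t ht
  refine ⟨by rw [Matrix.mulVec_add, Matrix.mulVec_smul, hy.1, hw, smul_zero, add_zero], ?_⟩
  convert ht using 1
  module

lemma eventually_isGreatest_image_slidingBox {y w : n → ℝ} (hy : y ∈ slidingBox A x l u z₀)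
    (hmax : IsMaxOn φ (slidingBox A x l u z₀) y) (hw : A *ᵥ w = 0)
    (hwx : ∀ j, (y - z₀ • x) j = l j ∨ (y - z₀ • x) j = u j → w j = x j) :
    ∀ᶠ z in 𝓝 z₀, IsGreatest (φ '' slidingBox A x l u z) (φ w * z + (φ y - φ w * z₀)) := by
  have hadd := eventually_add_smul_mem_slidingBox hy hw hwx
  have hsub := (tendsto_neg (0 : ℝ)).eventually (neg_zero (G := ℝ) ▸ hadd)
  have hsymm : ∀ᶠ z in 𝓝 z₀, y + (z - z₀) • w ∈ slidingBox A x l u (z₀ + (z - z₀)) ∧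
      y - (z - z₀) • w ∈ slidingBox A x l u (z₀ - (z - z₀)) := by
    have htend : Tendsto (fun z => z - z₀) (𝓝 z₀) (𝓝 0) := by
      simpa using (continuous_sub_right z₀).tendsto z₀
    simpa only [neg_smul, ← sub_eq_add_neg] using htend.eventually (hadd.and hsub)
  filter_upwards [hsymm] with z hz
  have hopt := isMaxOn_add_of_convex_graph (convex_graph_slidingBox A x l u) hmax hz.2
  have hval : φ w * z + (φ y - φ w * z₀) = φ (y + (z - z₀) • w) := by
    rw [map_add, map_smul, smul_eq_mul]
    ring
  rw [add_sub_cancel] at hz hopt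
  rw [hval]
  exact ⟨Set.mem_image_of_mem φ hz.1, Set.forall_mem_image.2 (isMaxOn_iff.1 hopt)⟩

lemma exists_sign_mul_dotProduct_eq [Finite m] (hA : A.IsTotallyUnimodular)
    (hne : (slidingBox A x l u z₀).Nonempty)
    (hturn : ¬ ∃ a b, ∀ᶠ z in 𝓝 z₀, IsGreatest (φ '' slidingBox A x l u z) (a * z + b)) :
    ∃ (D : n → SignType) (s : n → ℝ), (∀ j, s j = l j ∨ s j = u j) ∧
      (fun j => (D j : ℝ)) ⬝ᵥ x ≠ 0 ∧
      z₀ * ((fun j => (D j : ℝ)) ⬝ᵥ x) = -((fun j => (D j : ℝ)) ⬝ᵥ s) := by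
  classical
  obtain ⟨y, hy, hmax⟩ := (isCompact_slidingBox A x l u z₀).exists_isMaxOn hne
    φ.continuous_of_finiteDimensional.continuousOn
  let T : Set n := {j | (y - z₀ • x) j = l j ∨ (y - z₀ • x) j = u j}
  have hT : ∀ w, A *ᵥ w = 0 → ∃ j ∈ T, w j ≠ x j := by
    intro w hw
    by_contra! hwx
    exact hturn ⟨_, _, eventually_isGreatest_image_slidingBox hy hmax hw hwx⟩
  obtain ⟨D, hDker, hDT, hDx⟩ := exists_sign_dotProduct_eq_zero hA hT
  let s : n → ℝ := T.piecewise (y - z₀ • x) l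
  have hDs : (fun j => (D j : ℝ)) ⬝ᵥ s = (fun j => (D j : ℝ)) ⬝ᵥ (y - z₀ • x) := by
    refine Finset.sum_congr rfl fun j _ => ?_
    by_cases hj : j ∈ T
    · simp [s, hj]
    · simp [hDT j hj]
  refine ⟨D, s, fun j => ?_, hDx, ?_⟩
  · by_cases hj : j ∈ T
    · simp only [s, T.piecewise_eq_of_mem _ _ hj]
      exact hj
    · exact .inl (T.piecewise_eq_of_notMem _ _ hj)
  · rw [hDs, dotProduct_sub, dotProduct_smul, hDker y hy.1, smul_eq_mul, zero_sub, neg_neg]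

end ParametricProgram

theorem turning_coordinate_form_general {m n : Type*} [Finite m] [Fintype n] {A : Matrix m n ℝ}
    (hA : A.IsTotallyUnimodular) {φ : (n → ℝ) →ₗ[ℝ] ℝ} {x l u : n → ℝ}
    (hx : ∀ j, ∃ a : ℤ, x j = a) (hl : ∀ j, ∃ a : ℤ, l j = a) (hu : ∀ j, ∃ a : ℤ, u j = a)
    {z₀ : ℝ} (hne : (slidingBox A x l u z₀).Nonempty)
    (hturn : ¬ ∃ a b, ∀ᶠ z in 𝓝 z₀, IsGreatest (φ '' slidingBox A x l u z) (a * z + b)) :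
    ∃ ς σ : ℤ, σ ≠ 0 ∧ z₀ = (ς : ℝ) / (σ : ℝ) ∧
      |(σ : ℝ)| ≤ ∑ j, |x j| ∧ |(ς : ℝ)| ≤ ∑ j, max |l j| |u j| := by
  obtain ⟨D, s, hs, hDx, hz₀⟩ := exists_sign_mul_dotProduct_eq hA hne hturn
  have hsint (j : n) : ∃ a : ℤ, s j = a := by
    rcases hs j with h | h <;> rw [h]
    exacts [hl j, hu j]
  have hsle (j : n) : |s j| ≤ max |l j| |u j| := by
    rcases hs j with h | h <;> simp [h]
  obtain ⟨σ, hσ⟩ := exists_int_eq_sign_dotProduct D hx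
  obtain ⟨ς, hς⟩ := exists_int_eq_sign_dotProduct D hsint
  refine ⟨-ς, σ, ?_, ?_, ?_, ?_⟩
  · rintro rfl
    exact hDx (by simpa using hσ)
  · rw [eq_div_iff (hσ ▸ hDx), ← hσ, hz₀, hς, Int.cast_neg]
  · exact hσ ▸ abs_sign_dotProduct_le D x
  · rw [Int.cast_neg, abs_neg, ← hς]
    exact (abs_sign_dotProduct_le D s).trans (Finset.sum_le_sum fun j _ => hsle j)

lemma TotUnimodular.isTotallyUnimodular {m n : ℕ} {A : Matrix (Fin m) (Fin n) ℝ}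
    (hA : TotUnimodular A) : A.IsTotallyUnimodular := by
  intro k f g _ _
  rcases hA k f g with h | h | h
  exacts [⟨0, by simp [h]⟩, ⟨1, by simp [h]⟩, ⟨-1, by simp [h]⟩]

lemma Dfeas_eq_slidingBox {m n : ℕ} (A : Matrix (Fin m) (Fin n) ℝ) (d : Fin n → ℝ)
    {x0 : Fin n → ℝ} (hx0 : ∀ j, 0 ≤ x0 j) (z : ℝ) :
    Dfeas A d x0 z = slidingBox A x0 (-d) ((Function.support x0).indicator d) z := by
  ext y
  refine and_congr_right fun _ => ?_
  simp only [Set.mem_Icc, Pi.le_def, ← forall_and]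
  refine forall_congr' fun j => ?_
  rcases (hx0 j).eq_or_lt with hj | hj
  · simp [← hj]
  · simp [hj, hj.ne', mul_comm z, add_comm (_ * _), Set.indicator]

lemma exists_int_div_of_not_eventually_isGreatest_Dfeas {m n : ℕ}
    {A : Matrix (Fin m) (Fin n) ℝ} (hA : TotUnimodular A) {c d x0 : Fin n → ℝ}
    (hx0 : ∀ j, 0 ≤ x0 j) (hx0int : ∀ j, ∃ a : ℤ, x0 j = a) (hdint : ∀ j, ∃ a : ℤ, d j = a)
    {z₀ : ℝ} (hne : (Dfeas A d x0 z₀).Nonempty)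
    (hturn : ¬ ∃ a b, ∀ᶠ z in 𝓝 z₀,
      IsGreatest ((fun y => c ⬝ᵥ y) '' Dfeas A d x0 z) (a * z + b)) :
    ∃ ς σ : ℤ, σ ≠ 0 ∧ z₀ = (ς : ℝ) / (σ : ℝ) ∧
      |(σ : ℝ)| ≤ ∑ j, |x0 j| ∧ |(ς : ℝ)| ≤ ∑ j, |d j| := by
  simp only [Dfeas_eq_slidingBox A d hx0] at hne hturn
  set u := (Function.support x0).indicator d
  have hu (j : Fin n) : u j = 0 ∨ u j = d j := Set.indicator_eq_zero_or_self _ _ _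
  have hlint (j : Fin n) : ∃ a : ℤ, (-d) j = a := (hdint j).imp' (- ·) fun a ha => by simp [ha]
  have huint (j : Fin n) : ∃ a : ℤ, u j = a := by
    rcases hu j with h | h <;> rw [h]
    exacts [⟨0, by simp⟩, hdint j]
  have hmax (j : Fin n) : max |(-d) j| |u j| = |d j| := by
    rcases hu j with h | h <;> simp [h]
  simpa only [hmax] using turning_coordinate_form_general hA.isTotallyUnimodular
    (φ := dotProductBilin ℝ ℝ c) hx0int hlint huint hne hturn

lemma exists_psi_eq_on_Icc {m n : ℕ} {A : Matrix (Fin m) (Fin n) ℝ} {c d x0 : Fin n → ℝ}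
    {z₀ a b : ℝ}
    (h : ∀ᶠ z in 𝓝 z₀, IsGreatest ((fun y => c ⬝ᵥ y) '' Dfeas A d x0 z) (a * z + b)) :
    ∃ ε > 0, ∀ z ∈ Set.Icc (z₀ - ε) (z₀ + ε), psi A c d x0 z = a * z + b := by
  obtain ⟨ε, hε, hball⟩ := Metric.nhds_basis_closedBall.eventually_iff.1 h
  rw [Real.closedBall_eq_Icc] at hball
  exact ⟨ε, hε, fun z hz => (hball hz).csSup_eq⟩

lemma sum_abs_le_card_mul {ι : Type*} [Fintype ι] {S : Finset ι} {f : ι → ℝ} {M : ℝ}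
    (hS : ∀ j ∉ S, f j = 0) (hM : ∀ j ∈ S, |f j| ≤ M) : ∑ j, |f j| ≤ S.card * M := by
  rw [← Finset.sum_subset S.subset_univ fun j _ hj => by rw [hS j hj, abs_zero], ← nsmul_eq_mul]
  exact Finset.sum_le_card_nsmul S _ M hM

/-- under total unimodularity and integrality, every turning coordinate of
`ψ` is a fraction `ς/σ` with `|σ| ≤ 2|J̄|x⁰_max` and `|ς| ≤ (n + |J̄|)d_max`. -/
theorem turning_coordinate_form {m n : ℕ} (A : Matrix (Fin m) (Fin n) ℝ)
    (c d x0 : Fin n → ℝ) (hd : ∀ j, 0 < d j) (hx0 : ∀ j, 0 ≤ x0 j)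
    (hTU : TotUnimodular A)
    (hx0int : ∀ j, ∃ a : ℤ, x0 j = a) (hdint : ∀ j, ∃ a : ℤ, d j = a)
    (Jbar : Finset (Fin n)) (hJbar : ∀ j, j ∈ Jbar ↔ 0 < x0 j) (hJne : Jbar.Nonempty)
    (xmax dmax : ℝ)
    (hxmax : IsGreatest (x0 '' {j | 0 < x0 j}) xmax)
    (hdmax : IsGreatest (Set.range d) dmax)
    (z₀ : ℝ)
    (hturn : ∃ ε₀ > 0, (∀ z ∈ Set.Icc (z₀ - ε₀) (z₀ + ε₀), (Dfeas A d x0 z).Nonempty) ∧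
      ∀ ε > 0, ¬ ∃ a b : ℝ, ∀ z ∈ Set.Icc (z₀ - ε) (z₀ + ε),
        psi A c d x0 z = a * z + b) :
    ∃ ς σ : ℤ, σ ≠ 0 ∧ z₀ = (ς : ℝ) / (σ : ℝ) ∧
      |(σ : ℝ)| ≤ 2 * (Jbar.card : ℝ) * xmax ∧
      |(ς : ℝ)| ≤ ((n : ℝ) + (Jbar.card : ℝ)) * dmax := by
  obtain ⟨ε₀, hε₀, hne, hnotaffine⟩ := hturn
  have hne₀ : (Dfeas A d x0 z₀).Nonempty := hne z₀ ⟨by linarith, by linarith⟩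
  have hturn₀ : ¬ ∃ a b, ∀ᶠ z in 𝓝 z₀,
      IsGreatest ((fun y => c ⬝ᵥ y) '' Dfeas A d x0 z) (a * z + b) := by
    rintro ⟨a, b, h⟩
    obtain ⟨ε, hε, hpsi⟩ := exists_psi_eq_on_Icc h
    exact hnotaffine ε hε ⟨a, b, hpsi⟩
  obtain ⟨ς, σ, hσ, hz₀, hσle, hςle⟩ :=
    exists_int_div_of_not_eventually_isGreatest_Dfeas hTU hx0 hx0int hdint hne₀ hturn₀
  have hx0sum : ∑ j, |x0 j| ≤ Jbar.card * xmax := by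
    refine sum_abs_le_card_mul (fun j hj => ?_) fun j hj => ?_
    · exact ((hx0 j).eq_of_not_lt (mt (hJbar j).2 hj)).symm
    · exact (abs_of_nonneg (hx0 j)).trans_le (hxmax.2 ⟨j, (hJbar j).1 hj, rfl⟩)
  have hdle (j : Fin n) : |d j| ≤ dmax := (abs_of_pos (hd j)).trans_le (hdmax.2 ⟨j, rfl⟩)
  have hdsum : ∑ j, |d j| ≤ n * dmax := by
    simpa using sum_abs_le_card_mul (S := Finset.univ) (by simp) fun j _ => hdle j
  have hdmax₀ : 0 ≤ Jbar.card * dmax :=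
    mul_nonneg (Nat.cast_nonneg _) ((abs_nonneg _).trans (hdle hJne.choose))
  exact ⟨ς, σ, hσ, hz₀, by linarith [abs_nonneg (σ : ℝ)], by linarith⟩
end

section
/- Let δ = c_{J̄}·x⁰_{J̄} − K. Suppose there exist z₀ ∈ ℝ and k ∈ ℝ such that F(z) ≠ ∅ for every z ≥ z₀, ψ(z) = ψ(z₀) + k·(z − z₀) for every z ≥ z₀, and k > δ. Then the set {c·y − δ·z : z ∈ ℝ, y ∈ F(z)} is not bounded above; that is, the problem of maximizing c·y + (K − c_{J̄}·x⁰_{J̄})·z over all pairs (y, z) with y ∈ F(z) is unbounded. -/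
open Matrix BigOperators

/-!
An upper bound `M` for the joint problem bounds every slice problem: `sup f(F z) ≤ M + δ * z`.
This fails for large `z` once the left side lies above a line of slope `k > δ` there.
-/

theorem eventually_add_mul_lt_add_mul {𝕜 : Type*} [Field 𝕜] [LinearOrder 𝕜]
    [IsStrictOrderedRing 𝕜] {δ k : 𝕜} (hk : δ < k) (M a : 𝕜) :
    ∀ᶠ z in Filter.atTop, M + δ * z < a + k * z := by
  filter_upwards [Filter.eventually_gt_atTop ((M - a) / (k - δ))] with z hz
  have hgap : M - a < z * (k - δ) := (div_lt_iff₀ (sub_pos.2 hk)).1 hz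
  linarith

theorem csSup_image_le_add_of_mem_upperBounds {ι α β : Type*} [ConditionallyCompleteLattice β]
    [AddCommGroup β] [IsOrderedAddMonoid β] {F : ι → Set α} {f : α → β} {g : ι → β} {M : β}
    (hM : M ∈ upperBounds {t | ∃ i, ∃ y ∈ F i, t = f y - g i}) {i : ι} (hi : (F i).Nonempty) :
    sSup (f '' F i) ≤ M + g i :=
  csSup_le (hi.image f) <| Set.forall_mem_image.2 fun y hy =>
    sub_le_iff_le_add.1 (hM ⟨i, y, hy, rfl⟩)

theorem unbounded_of_slope_gt_general {α : Type*} (F : ℝ → Set α) (f : α → ℝ) (a δ k : ℝ)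
    (hF : ∃ᶠ z in Filter.atTop, (F z).Nonempty ∧ a + k * z ≤ sSup (f '' F z)) (hk : δ < k) :
    ¬ BddAbove {t : ℝ | ∃ z : ℝ, ∃ y ∈ F z, t = f y - δ * z} := by
  rintro ⟨M, hM⟩
  obtain ⟨z, ⟨hne, hle⟩, hlt⟩ :=
    (hF.and_eventually (eventually_add_mul_lt_add_mul hk M a)).exists
  exact hlt.not_ge (hle.trans (csSup_image_le_add_of_mem_upperBounds hM hne))

/-- if `F(z) ≠ ∅` for all `z ≥ z₀` and `ψ` is eventually linear with slope
`k > δ`, then the problem of maximizing `c·y − δ·z` over pairs `(y, z)` with `y ∈ F(z)`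
is unbounded. -/
theorem unbounded_of_slope_gt {m n : ℕ} (A : Matrix (Fin m) (Fin n) ℝ)
    (c d x0 : Fin n → ℝ) (hd : ∀ j, 0 < d j) (hx0 : ∀ j, 0 ≤ x0 j) (K : ℝ)
    (δ : ℝ) (hδ : δ = (∑ j, if 0 < x0 j then c j * x0 j else 0) - K)
    (z₀ k : ℝ)
    (hne : ∀ z : ℝ, z₀ ≤ z → (Dfeas A d x0 z).Nonempty)
    (hlin : ∀ z : ℝ, z₀ ≤ z → psi A c d x0 z = psi A c d x0 z₀ + k * (z - z₀))
    (hk : δ < k) :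
    ¬ BddAbove {t : ℝ | ∃ z : ℝ, ∃ y ∈ Dfeas A d x0 z, t = c ⬝ᵥ y - δ * z} := by
  have hpsi z (hz : z₀ ≤ z) : psi A c d x0 z₀ - k * z₀ + k * z ≤ psi A c d x0 z := by
    linarith [hlin z hz]
  exact unbounded_of_slope_gt_general _ _ _ δ k
    ((Filter.eventually_ge_atTop z₀).mono fun z hz => ⟨hne z hz, hpsi z hz⟩).frequently hk
end
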